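/- arXiv:2505.17277 — 3 statements merged into one kernel-verified Lean document; each statement's English description precedes it below -/
import Mathlib

section
/- The meta MWU algorithm over (d+1)·M prior-aware BM-reductions achieves comparator-adaptive Φ-regret: there is a universal constant C > 0 such that for every d ≥ 2, T ≥ 1, and every loss sequence ℓ_1,…,ℓ_T ∈ [0,1]^d, the iterates p_t of the algorithm satisfy Reg(φ) = Σ_{t=1}^T ⟨p_t − φ^T p_t, ℓ_t⟩ ≤ C·(√(T·log(1/π(φ))) + √(T·log d)) for every φ ∈ Φ_b, and consequently Reg(φ) ≤ C'·(√((1 + c_φ log d)·T) + √(T·log d)) for every φ ∈ S, for a universal constant C'. -/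
open Finset

/-- The binary row-stochastic matrix associated with a map `f : [d] → [d]`. -/
def toMat (d : ℕ) (f : Fin d → Fin d) : Matrix (Fin d) (Fin d) ℝ :=
  fun i j => if f i = j then 1 else 0

/-- The set `Φ_b` of binary row-stochastic `d × d` matrices. -/
noncomputable def PhiB (d : ℕ) : Finset (Matrix (Fin d) (Fin d) ℝ) := by
  classical exact Finset.image (toMat d) Finset.univ

/-- A matrix is row-stochastic if every row lies in the simplex. -/
def RowStochastic {d : ℕ} (φ : Matrix (Fin d) (Fin d) ℝ) : Prop :=
  ∀ i, (∀ j, 0 ≤ φ i j) ∧ ∑ j, φ i j = 1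

/-- A vector lies in the probability simplex `Δ(d)`. -/
def InSimplex (d : ℕ) (p : Fin d → ℝ) : Prop :=
  (∀ i, 0 ≤ p i) ∧ ∑ i, p i = 1

/-- The `ψ`-induced weight of `φ`: `π_ψ(φ) = ∏ i ⟨ψ_{i:}, φ_{i:}⟩`. -/
noncomputable def piInd {d : ℕ} (ψ φ : Matrix (Fin d) (Fin d) ℝ) : ℝ :=
  ∏ i, ∑ j, ψ i j * φ i j

/-- `ψ^k = ((d-2)/(d-1))·1 e_k^T + (1/(d(d-1)))·1 1^T`. -/
noncomputable def psiK (d : ℕ) (k : Fin d) : Matrix (Fin d) (Fin d) ℝ :=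
  fun _ j => ((d : ℝ) - 2) / ((d : ℝ) - 1) * (if j = k then 1 else 0) + 1 / ((d : ℝ) * ((d : ℝ) - 1))

/-- `ψ^{d+1} = ((d-2)/(d-1))·I + (1/(d(d-1)))·1 1^T`. -/
noncomputable def psiSelf (d : ℕ) : Matrix (Fin d) (Fin d) ℝ :=
  fun i j => ((d : ℝ) - 2) / ((d : ℝ) - 1) * (if i = j then 1 else 0) + 1 / ((d : ℝ) * ((d : ℝ) - 1))

/-- The special prior `π = (1/(2d)) Σ_k π_{ψ^k} + (1/2) π_{ψ^{d+1}}`. -/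
noncomputable def priorPi (d : ℕ) (φ : Matrix (Fin d) (Fin d) ℝ) : ℝ :=
  1 / (2 * d) * ∑ k : Fin d, piInd (psiK d k) φ + 1 / 2 * piInd (psiSelf d) φ

/-- `d^self_φ`: the number of indices `i` whose row equals `e_i^T`. -/
noncomputable def dSelf {d : ℕ} (φ : Matrix (Fin d) (Fin d) ℝ) : ℕ :=
  Nat.card {i : Fin d // φ i = fun j => if j = i then (1 : ℝ) else 0}

/-- `d^unif_φ`: the maximum multiplicity in the multiset of rows of `φ`. -/
noncomputable def dUnif {d : ℕ} (φ : Matrix (Fin d) (Fin d) ℝ) : ℕ :=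
  Finset.univ.sup fun i : Fin d => Nat.card {j : Fin d // φ j = φ i}

/-- Complexity measure for binary row-stochastic matrices. -/
noncomputable def cB {d : ℕ} (φ : Matrix (Fin d) (Fin d) ℝ) : ℕ :=
  min (d - dSelf φ) (d - dUnif φ + 1)

/-- `Q_φ`: distributions over `Φ_b` (indexed by maps `f : [d] → [d]`) averaging to `φ`. -/
def QSet (d : ℕ) (φ : Matrix (Fin d) (Fin d) ℝ) : Set ((Fin d → Fin d) → ℝ) :=
  {q | (∀ f, 0 ≤ q f) ∧ (∑ f, q f = 1) ∧ ∀ i j, ∑ f, q f * toMat d f i j = φ i j}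

/-- Extended complexity measure `c_φ = inf_{q ∈ Q_φ} E_{φ'∼q}[c_{φ'}]`. -/
noncomputable def cGen (d : ℕ) (φ : Matrix (Fin d) (Fin d) ℝ) : ℝ :=
  sInf ((fun q => ∑ f : Fin d → Fin d, q f * (cB (toMat d f) : ℝ)) '' QSet d φ)

/-- Matrix inner product `⟨φ, p ℓ^T⟩`. -/
noncomputable def lossInner {d : ℕ} (φ : Matrix (Fin d) (Fin d) ℝ) (p ℓ : Fin d → ℝ) : ℝ :=
  ∑ i, ∑ j, φ i j * (p i * ℓ j)

/-- The mean matrix `E_{f∼q}[φ_f]` of a weight vector over binary matrices. -/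
noncomputable def mixMat (d : ℕ) (q : (Fin d → Fin d) → ℝ) : Matrix (Fin d) (Fin d) ℝ :=
  fun i j => ∑ f, q f * toMat d f i j

/-- KL divergence of `q` (a distribution over `Φ_b`, indexed by maps) from the prior `π`. -/
noncomputable def klPrior (d : ℕ) (q : (Fin d → Fin d) → ℝ) : ℝ :=
  ∑ f, q f * Real.log (q f / priorPi d (toMat d f))

/-- The kernel `K(B,A) = Σ_{φ∈Φ_b} π(φ) Π_{i,j : φ_{ij}=1} B_{ij} A_{ij}`. -/
noncomputable def kernelK (d : ℕ) (B A : Matrix (Fin d) (Fin d) ℝ) : ℝ := by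
  classical exact
    ∑ φ ∈ PhiB d, priorPi d φ * ∏ i, ∏ j, if φ i j = 1 then B i j * A i j else 1

/-- The stochastic matrices `ψ^1, …, ψ^{d+1}`, indexed by `k ∈ {1, …, d+1}`. -/
noncomputable def psiAll (d k : ℕ) : Matrix (Fin d) (Fin d) ℝ :=
  if k = d + 1 then psiSelf d
  else fun _ j =>
    ((d : ℝ) - 2) / ((d : ℝ) - 1) * (if (j : ℕ) + 1 = k then 1 else 0) +
      1 / ((d : ℝ) * ((d : ℝ) - 1))


lemma exp_neg_le_quad {x : ℝ} (hx : 0 ≤ x) : Real.exp (-x) ≤ 1 - x + x ^ 2 / 2 := by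
  have h := Real.quadratic_le_exp_of_nonneg hx
  have h1 : Real.exp (-x) * Real.exp x = 1 := by rw [← Real.exp_add]; simp
  have h2 : 0 < Real.exp (-x) := Real.exp_pos _
  have h3 : Real.exp (-x) * (1 + x + x ^ 2 / 2) ≤ 1 := by
    exact (mul_le_mul_of_nonneg_left h h2.le).trans h1.le
  have h4 : 0 < 1 + x + x ^ 2 / 2 := by positivity
  have h5 : (1 : ℝ) ≤ (1 - x + x ^ 2 / 2) * (1 + x + x ^ 2 / 2) := by
    nlinarith [sq_nonneg (x ^ 2)]
  exact le_of_mul_le_mul_right (h3.trans h5) h4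

/-- Regret bound for exponential weights with prior `v`. -/
lemma mwu_regret {ι : Type*} (s : Finset ι) (v : ι → ℝ) (hv : ∀ i ∈ s, 0 < v i)
    (hs : ∑ i ∈ s, v i = 1) (η : ℝ) (hη : 0 < η) (T : ℕ) (g : ℕ → ι → ℝ) (B : ℕ → ℝ)
    (hg : ∀ t ∈ Finset.Icc 1 T, ∀ i ∈ s, 0 ≤ g t i ∧ g t i ≤ B t) (x : ℕ → ι → ℝ)
    (hx : ∀ t ∈ Finset.Icc 1 T, ∀ i ∈ s, x t i =
      v i * Real.exp (-η * ∑ τ ∈ Finset.Ico 1 t, g τ i) /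
        ∑ j ∈ s, v j * Real.exp (-η * ∑ τ ∈ Finset.Ico 1 t, g τ j))
    (i : ι) (hi : i ∈ s) :
    ∑ t ∈ Finset.Icc 1 T, (∑ j ∈ s, x t j * g t j - g t i) ≤
      Real.log (1 / v i) / η + η / 2 * ∑ t ∈ Finset.Icc 1 T, B t ^ 2 := by
  have hZ : ∀ n, 0 < ∑ j ∈ s, v j * Real.exp (-η * ∑ τ ∈ Finset.Ico 1 n, g τ j) := by
    intro n
    exact Finset.sum_pos (fun j hj => mul_pos (hv j hj) (Real.exp_pos _)) ⟨i, hi⟩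
  have key : ∀ n ≤ T, ∑ j ∈ s, v j * Real.exp (-η * ∑ τ ∈ Finset.Ico 1 (n + 1), g τ j) ≤
      Real.exp (∑ t ∈ Finset.Icc 1 n, (-η * ∑ j ∈ s, x t j * g t j + η ^ 2 / 2 * B t ^ 2)) := by
    intro n
    induction n with
    | zero => intro _; simp [hs]
    | succ n ih =>
      intro hn
      have hmem : n + 1 ∈ Finset.Icc 1 T := by simp; omega
      have ih' := ih (by omega)
      rw [Finset.sum_Icc_succ_top (by omega), Real.exp_add]
      set Z := ∑ j ∈ s, v j * Real.exp (-η * ∑ τ ∈ Finset.Ico 1 (n + 1), g τ j) with hZdef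
      have hZp : 0 < Z := hZ (n + 1)
      have hxx : ∀ j ∈ s, x (n + 1) j * Z =
          v j * Real.exp (-η * ∑ τ ∈ Finset.Ico 1 (n + 1), g τ j) := by
        intro j hj
        rw [hx _ hmem j hj, ← hZdef, div_mul_cancel₀ _ hZp.ne']
      have hxpos : ∀ j ∈ s, 0 ≤ x (n + 1) j := by
        intro j hj
        rw [hx _ hmem j hj]
        exact div_nonneg (mul_nonneg (hv j hj).le (Real.exp_pos _).le) hZp.le
      have hxsum : ∑ j ∈ s, x (n + 1) j = 1 := by
        have : (∑ j ∈ s, x (n + 1) j) * Z = 1 * Z := by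
          rw [Finset.sum_mul, Finset.sum_congr rfl hxx, one_mul]
        exact mul_right_cancel₀ hZp.ne' this
      have e1 : ∑ j ∈ s, v j * Real.exp (-η * ∑ τ ∈ Finset.Ico 1 (n + 1 + 1), g τ j) =
          Z * ∑ j ∈ s, x (n + 1) j * Real.exp (-(η * g (n + 1) j)) := by
        rw [Finset.mul_sum]
        refine Finset.sum_congr rfl fun j hj => ?_
        rw [Finset.sum_Ico_succ_top (by omega), mul_add, Real.exp_add, ← mul_assoc, ← hxx j hj,
          neg_mul]
        ring
      rw [e1]
      refine mul_le_mul ih' ?_ ?_ (Real.exp_pos _).le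
      · calc ∑ j ∈ s, x (n + 1) j * Real.exp (-(η * g (n + 1) j))
            ≤ ∑ j ∈ s, (x (n + 1) j - η * (x (n + 1) j * g (n + 1) j) +
                x (n + 1) j * (η ^ 2 / 2 * B (n + 1) ^ 2)) := by
              refine Finset.sum_le_sum fun j hj => ?_
              obtain ⟨h0, h1⟩ := hg _ hmem j hj
              have h2 := exp_neg_le_quad (mul_nonneg hη.le h0)
              have h3 : g (n + 1) j ^ 2 ≤ B (n + 1) ^ 2 := pow_le_pow_left₀ h0 h1 2
              have h4 : η ^ 2 / 2 * g (n + 1) j ^ 2 ≤ η ^ 2 / 2 * B (n + 1) ^ 2 :=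
                mul_le_mul_of_nonneg_left h3 (by positivity)
              calc _ ≤ x (n + 1) j * (1 - η * g (n + 1) j + η ^ 2 / 2 * B (n + 1) ^ 2) :=
                    mul_le_mul_of_nonneg_left (by nlinarith) (hxpos j hj)
                _ = _ := by ring
          _ = (-η * ∑ j ∈ s, x (n + 1) j * g (n + 1) j + η ^ 2 / 2 * B (n + 1) ^ 2) + 1 := by
              rw [Finset.sum_add_distrib, Finset.sum_sub_distrib, ← Finset.mul_sum,
                ← Finset.sum_mul, hxsum]
              ring
          _ ≤ _ := Real.add_one_le_exp _
      · exact Finset.sum_nonneg fun j hj => mul_nonneg (hxpos j hj) (Real.exp_pos _).le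
  have hk := key T le_rfl
  have hlow : v i * Real.exp (-η * ∑ τ ∈ Finset.Ico 1 (T + 1), g τ i) ≤
      ∑ j ∈ s, v j * Real.exp (-η * ∑ τ ∈ Finset.Ico 1 (T + 1), g τ j) :=
    Finset.single_le_sum (f := fun j => v j * Real.exp (-η * ∑ τ ∈ Finset.Ico 1 (T + 1), g τ j))
      (fun j hj => mul_nonneg (hv j hj).le (Real.exp_pos _).le) hi
  have h1 := Real.log_le_log (mul_pos (hv i hi) (Real.exp_pos _)) (hlow.trans hk)
  rw [Real.log_exp, Real.log_mul (hv i hi).ne' (Real.exp_pos _).ne', Real.log_exp,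
    Finset.sum_add_distrib, ← Finset.mul_sum, ← Finset.mul_sum,
    show Finset.Ico 1 (T + 1) = Finset.Icc 1 T from by ext; simp] at h1
  rw [Finset.sum_sub_distrib, one_div, Real.log_inv]
  have h2 : η * (∑ t ∈ Finset.Icc 1 T, ∑ j ∈ s, x t j * g t j - ∑ t ∈ Finset.Icc 1 T, g t i) ≤
      η * (-Real.log (v i) / η + η / 2 * ∑ t ∈ Finset.Icc 1 T, B t ^ 2) := by
    have : η * (-Real.log (v i) / η + η / 2 * ∑ t ∈ Finset.Icc 1 T, B t ^ 2) =
      -Real.log (v i) + η ^ 2 / 2 * ∑ t ∈ Finset.Icc 1 T, B t ^ 2 := by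
      field_simp
    rw [this]; linarith
  exact le_of_mul_le_mul_left h2 hη

/-- The recursive multiplicative update has the closed form. -/
lemma mwu_closed {ι : Type*} (s : Finset ι) (η : ℝ) (T : ℕ) (g : ℕ → ι → ℝ)
    (w : ℕ → ι → ℝ) (hw1 : ∀ i ∈ s, 0 < w 1 i) (hs : ∑ i ∈ s, w 1 i = 1)
    (hrec : ∀ t ∈ Finset.Icc 1 T, ∀ i ∈ s, w (t + 1) i =
      w t i * Real.exp (-η * g t i) / ∑ j ∈ s, w t j * Real.exp (-η * g t j)) :
    ∀ t ∈ Finset.Icc 1 T, ∀ i ∈ s, w t i =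
      w 1 i * Real.exp (-η * ∑ τ ∈ Finset.Ico 1 t, g τ i) /
        ∑ j ∈ s, w 1 j * Real.exp (-η * ∑ τ ∈ Finset.Ico 1 t, g τ j) := by
  intro t
  induction t with
  | zero => intro h; simp at h
  | succ n ih =>
    intro hn i hi
    rcases Nat.eq_zero_or_pos n with h0 | h0
    · subst h0; simp [hs]
    · have hmem : n ∈ Finset.Icc 1 T := by simp at hn ⊢; omega
      have ih' := ih hmem
      have hZ : 0 < ∑ j ∈ s, w 1 j * Real.exp (-η * ∑ τ ∈ Finset.Ico 1 n, g τ j) :=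
        Finset.sum_pos (fun j hj => mul_pos (hw1 j hj) (Real.exp_pos _)) ⟨i, hi⟩
      set Z := ∑ j ∈ s, w 1 j * Real.exp (-η * ∑ τ ∈ Finset.Ico 1 n, g τ j)
      have e : ∀ j ∈ s, w n j * Real.exp (-η * g n j) =
          (w 1 j * Real.exp (-η * ∑ τ ∈ Finset.Ico 1 (n + 1), g τ j)) / Z := by
        intro j hj
        rw [ih' j hj, Finset.sum_Ico_succ_top h0, mul_add, Real.exp_add]
        ring
      rw [hrec n hmem i hi, e i hi, Finset.sum_congr rfl e, ← Finset.sum_div,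
        div_div_div_cancel_right₀ hZ.ne']

lemma mem_PhiB {d : ℕ} {φ : Matrix (Fin d) (Fin d) ℝ} (h : φ ∈ PhiB d) :
    ∃ f, toMat d f = φ := by
  classical
  unfold PhiB at h
  simpa using h

lemma toMat_mem_PhiB {d : ℕ} (f : Fin d → Fin d) : toMat d f ∈ PhiB d := by
  classical
  unfold PhiB
  simp

lemma piInd_toMat {d : ℕ} (ψ : Matrix (Fin d) (Fin d) ℝ) (f : Fin d → Fin d) :
    piInd ψ (toMat d f) = ∏ i, ψ i (f i) := by
  simp [piInd, toMat]

lemma psiAll_eq_psiK {d : ℕ} (k : Fin d) : psiAll d (k + 1) = psiK d k := by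
  have : (k : ℕ) + 1 ≠ d + 1 := by have := k.2; omega
  funext i j
  have h1 : psiAll d (k + 1) = fun (_ j : Fin d) =>
      ((d : ℝ) - 2) / ((d : ℝ) - 1) * (if (j : ℕ) + 1 = (k : ℕ) + 1 then 1 else 0) +
      1 / ((d : ℝ) * ((d : ℝ) - 1)) := if_neg this
  have h2 := congrFun (congrFun h1 i) j
  refine h2.trans ?_
  simp [psiK, Fin.ext_iff]

lemma psiAll_self {d : ℕ} : psiAll d (d + 1) = psiSelf d := by simp [psiAll]

lemma psiAll_cases {d k : ℕ} (hk : k ∈ Finset.Icc 1 (d + 1)) :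
    (∃ k' : Fin d, k = k' + 1 ∧ psiAll d k = psiK d k') ∨ (k = d + 1 ∧ psiAll d k = psiSelf d) := by
  rw [Finset.mem_Icc] at hk
  by_cases h : k = d + 1
  · right; exact ⟨h, by rw [h]; exact psiAll_self⟩
  · left
    refine ⟨⟨k - 1, by omega⟩, by simp; omega, ?_⟩
    rw [← psiAll_eq_psiK]
    congr 1
    simp; omega

lemma psi_aux {d : ℕ} (hd : 2 ≤ d) : 0 ≤ ((d : ℝ) - 2) / ((d : ℝ) - 1) ∧
    1 / (d : ℝ) ^ 2 ≤ 1 / ((d : ℝ) * ((d : ℝ) - 1)) ∧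
    ((d : ℝ) - 2) / ((d : ℝ) - 1) + 1 / ((d : ℝ) * ((d : ℝ) - 1)) = 1 - 1 / d ∧
    ((d : ℝ) - 2) / ((d : ℝ) - 1) + d * (1 / ((d : ℝ) * ((d : ℝ) - 1))) = 1 := by
  have h : (2 : ℝ) ≤ d := by exact_mod_cast hd
  have h1 : (0 : ℝ) < d - 1 := by linarith
  have h2 : (0 : ℝ) < d := by linarith
  refine ⟨div_nonneg (by linarith) h1.le, ?_, ?_, ?_⟩
  · apply one_div_le_one_div_of_le (by positivity); nlinarith
  · field_simp; ring
  · field_simp; ring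

lemma psiAll_lower {d k : ℕ} (hd : 2 ≤ d) (hk : k ∈ Finset.Icc 1 (d + 1)) (i j : Fin d) :
    1 / (d : ℝ) ^ 2 ≤ psiAll d k i j := by
  obtain ⟨h1, h2, -, -⟩ := psi_aux hd
  rcases psiAll_cases hk with ⟨k', -, h⟩ | ⟨-, h⟩
  · rw [h]; unfold psiK
    split_ifs <;> linarith
  · rw [h]; unfold psiSelf
    split_ifs <;> linarith

lemma psiAll_sum {d k : ℕ} (hd : 2 ≤ d) (hk : k ∈ Finset.Icc 1 (d + 1)) (i : Fin d) :
    ∑ j, psiAll d k i j = 1 := by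
  obtain ⟨-, -, -, h4⟩ := psi_aux hd
  rcases psiAll_cases hk with ⟨k', -, h⟩ | ⟨-, h⟩
  · rw [h]; unfold psiK
    rw [Finset.sum_add_distrib, ← Finset.mul_sum]
    simpa using h4
  · rw [h]; unfold psiSelf
    rw [Finset.sum_add_distrib, ← Finset.mul_sum]
    simpa using h4

lemma psiAll_pos {d k : ℕ} (hd : 2 ≤ d) (hk : k ∈ Finset.Icc 1 (d + 1)) (i j : Fin d) :
    0 < psiAll d k i j := by
  have : (0 : ℝ) < d := by exact_mod_cast (by omega : 0 < d)
  exact lt_of_lt_of_le (by positivity) (psiAll_lower hd hk i j)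

lemma psiAll_le_one {d k : ℕ} (hd : 2 ≤ d) (hk : k ∈ Finset.Icc 1 (d + 1)) (i j : Fin d) :
    psiAll d k i j ≤ 1 := by
  rw [← psiAll_sum hd hk i]
  exact Finset.single_le_sum (fun j _ => (psiAll_pos hd hk i j).le) (Finset.mem_univ j)

lemma log_one_div_prod {d : ℕ} (ψ : Fin d → ℝ) (h : ∀ i, 0 < ψ i) :
    Real.log (1 / ∏ i, ψ i) = ∑ i, Real.log (1 / ψ i) := by
  simp only [one_div, Real.log_inv, Finset.sum_neg_distrib]
  rw [Real.log_prod (fun i _ => (h i).ne')]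

/-- Some `ψ^k`-induced weight dominates the prior. -/
lemma exists_k {d : ℕ} (hd : 2 ≤ d) (f : Fin d → Fin d) :
    0 < priorPi d (toMat d f) ∧ ∃ k ∈ Finset.Icc 1 (d + 1),
      Real.log (1 / piInd (psiAll d k) (toMat d f)) ≤ Real.log (1 / priorPi d (toMat d f)) := by
  have hd0 : (0 : ℝ) < d := by exact_mod_cast (by omega : 0 < d)
  have hmemK : ∀ k : Fin d, (k : ℕ) + 1 ∈ Finset.Icc 1 (d + 1) := by
    intro k; have := k.2; simp
  have hself : d + 1 ∈ Finset.Icc 1 (d + 1) := by simp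
  have hposA : ∀ k ∈ Finset.Icc 1 (d + 1), 0 < piInd (psiAll d k) (toMat d f) := by
    intro k hk
    rw [piInd_toMat]
    exact Finset.prod_pos fun i _ => psiAll_pos hd hk i _
  have hK : ∀ k : Fin d, 0 < piInd (psiK d k) (toMat d f) := fun k => by
    rw [← psiAll_eq_psiK]; exact hposA _ (hmemK k)
  have hS : 0 < piInd (psiSelf d) (toMat d f) := by
    rw [← psiAll_self]; exact hposA _ hself
  have hpos : 0 < priorPi d (toMat d f) := by
    unfold priorPi
    have h1 : 0 ≤ ∑ k : Fin d, piInd (psiK d k) (toMat d f) :=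
      Finset.sum_nonneg fun k _ => (hK k).le
    exact add_pos_of_nonneg_of_pos (mul_nonneg (by positivity) h1) (mul_pos (by norm_num) hS)
  refine ⟨hpos, ?_⟩
  by_contra hcon
  push Not at hcon
  have hlt : ∀ k ∈ Finset.Icc 1 (d + 1),
      piInd (psiAll d k) (toMat d f) < priorPi d (toMat d f) := by
    intro k hk
    by_contra hge
    push Not at hge
    exact absurd (hcon k hk) (not_lt.mpr (Real.log_le_log (one_div_pos.2 (hposA k hk))
      (one_div_le_one_div_of_le hpos hge)))
  have h1 : ∑ k : Fin d, piInd (psiK d k) (toMat d f) ≤ d * priorPi d (toMat d f) := by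
    calc _ ≤ ∑ k : Fin d, priorPi d (toMat d f) := Finset.sum_le_sum fun k _ => by
          have := hlt _ (hmemK k)
          rw [psiAll_eq_psiK] at this
          exact this.le
      _ = _ := by simp
  have h2 := hlt _ hself
  rw [psiAll_self] at h2
  have h3 : priorPi d (toMat d f) = 1 / (2 * d) * ∑ k : Fin d, piInd (psiK d k) (toMat d f) +
    1 / 2 * piInd (psiSelf d) (toMat d f) := rfl
  have h4 : 1 / (2 * (d : ℝ)) * ∑ k : Fin d, piInd (psiK d k) (toMat d f) ≤
      1 / (2 * (d : ℝ)) * (d * priorPi d (toMat d f)) :=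
    mul_le_mul_of_nonneg_left h1 (by positivity)
  have h5 : 1 / (2 * (d : ℝ)) * (d * priorPi d (toMat d f)) = priorPi d (toMat d f) / 2 := by
    field_simp
  linarith

lemma log_piInd_bounds {d k : ℕ} (hd : 2 ≤ d) (hk : k ∈ Finset.Icc 1 (d + 1))
    (f : Fin d → Fin d) :
    0 ≤ Real.log (1 / piInd (psiAll d k) (toMat d f)) ∧
    Real.log (1 / piInd (psiAll d k) (toMat d f)) ≤ 2 * (d : ℝ) ^ 2 := by
  have hd0 : (0 : ℝ) < d := by exact_mod_cast (by omega : 0 < d)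
  rw [piInd_toMat, log_one_div_prod _ (fun i => psiAll_pos hd hk i _)]
  constructor
  · refine Finset.sum_nonneg fun i _ => Real.log_nonneg ?_
    rw [le_div_iff₀ (psiAll_pos hd hk i _), one_mul]
    exact psiAll_le_one hd hk i _
  · calc _ ≤ ∑ i : Fin d, 2 * (d : ℝ) := by
          refine Finset.sum_le_sum fun i _ => ?_
          have h1 : 1 / psiAll d k i (f i) ≤ (d : ℝ) ^ 2 := by
            have := one_div_le_one_div_of_le (by positivity) (psiAll_lower hd hk i (f i))
            simpa using this
          have h2 := Real.log_le_log (by have := psiAll_pos hd hk i (f i); positivity) h1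
          rw [Real.log_pow] at h2
          have h3 := Real.log_le_sub_one_of_pos hd0
          push_cast at h2
          linarith
      _ = _ := by simp; ring

lemma log_prod_bound {d k : ℕ} (hd : 2 ≤ d) (hk : k ∈ Finset.Icc 1 (d + 1))
    (f : Fin d → Fin d) (A : Finset (Fin d)) (hA : ∀ i ∈ A, psiAll d k i (f i) = 1 - 1 / d) :
    Real.log (1 / piInd (psiAll d k) (toMat d f)) ≤
      2 + 2 * ((d - A.card : ℕ) : ℝ) * Real.log d := by
  have hd2 : (2 : ℝ) ≤ d := by exact_mod_cast hd
  have hd0 : (0 : ℝ) < d := by linarith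
  have hlogd : 0 ≤ Real.log d := Real.log_nonneg (by linarith)
  rw [piInd_toMat, log_one_div_prod _ (fun i => psiAll_pos hd hk i _)]
  have hcard : A.card ≤ d := by simpa using Finset.card_le_univ A
  calc _ ≤ ∑ i : Fin d, (2 / (d : ℝ) + if i ∈ Aᶜ then 2 * Real.log d else 0) := by
        refine Finset.sum_le_sum fun i _ => ?_
        by_cases hi : i ∈ A
        · rw [hA i hi]
          have h1 : (0 : ℝ) < 1 - 1 / d := by
            rw [sub_pos, div_lt_one hd0]; linarith
          have h2 := Real.log_le_sub_one_of_pos (x := 1 / (1 - 1 / (d : ℝ))) (by positivity)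
          have h3 : 1 / (1 - 1 / (d : ℝ)) - 1 ≤ 2 / d := by
            have h4 : (0 : ℝ) < d - 1 := by linarith
            have : 1 / (1 - 1 / (d : ℝ)) - 1 = 1 / (d - 1) := by
              have : 1 - 1 / (d : ℝ) = (d - 1) / d := by field_simp
              rw [this]; field_simp; ring
            rw [this, div_le_div_iff₀ h4 hd0]; linarith
          simp only [Finset.mem_compl, hi, not_true, if_false, add_zero]
          linarith
        · have h1 : 1 / psiAll d k i (f i) ≤ (d : ℝ) ^ 2 := by
            have := one_div_le_one_div_of_le (by positivity) (psiAll_lower hd hk i (f i))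
            simpa using this
          have h2 := Real.log_le_log (by have := psiAll_pos hd hk i (f i); positivity) h1
          rw [Real.log_pow] at h2
          push_cast at h2
          have h3 : 0 ≤ 2 / (d : ℝ) := by positivity
          simp only [Finset.mem_compl, hi, not_false_iff, if_true]
          linarith
    _ = _ := by
        rw [Finset.sum_add_distrib, ← Finset.sum_filter, Finset.filter_mem_eq_inter]
        simp [Finset.card_compl]
        field_simp

lemma toMat_row_eq {d : ℕ} (f : Fin d → Fin d) (i : Fin d) (j : Fin d) :
    (toMat d f i = fun j' => if j' = j then (1 : ℝ) else 0) ↔ f i = j := by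
  constructor
  · intro h
    have := congrFun h j
    simpa [toMat] using this
  · intro h
    funext j'
    subst h
    simp [toMat, eq_comm]

lemma log_prior_le {d : ℕ} (hd : 2 ≤ d) (f : Fin d → Fin d) :
    Real.log (1 / priorPi d (toMat d f)) ≤ 3 + 2 * (cB (toMat d f) : ℝ) * Real.log d := by
  classical
  have hd2 : (2 : ℝ) ≤ d := by exact_mod_cast hd
  have hd0 : (0 : ℝ) < d := by linarith
  have hlogd : 0 ≤ Real.log d := Real.log_nonneg (by linarith)
  have hlog2 : Real.log 2 ≤ 1 := by have := Real.log_two_lt_d9; linarith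
  obtain ⟨-, -, h3, -⟩ := psi_aux hd
  have hmemK : ∀ k : Fin d, (k : ℕ) + 1 ∈ Finset.Icc 1 (d + 1) := by
    intro k; have := k.2; simp
  have hself : d + 1 ∈ Finset.Icc 1 (d + 1) := by simp
  have hposA : ∀ k ∈ Finset.Icc 1 (d + 1), 0 < piInd (psiAll d k) (toMat d f) := by
    intro k hk
    rw [piInd_toMat]
    exact Finset.prod_pos fun i _ => psiAll_pos hd hk i _
  have hK : ∀ k : Fin d, 0 < piInd (psiK d k) (toMat d f) := fun k => by
    rw [← psiAll_eq_psiK]; exact hposA _ (hmemK k)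
  have hS : 0 < piInd (psiSelf d) (toMat d f) := by
    rw [← psiAll_self]; exact hposA _ hself
  have hdef : priorPi d (toMat d f) = 1 / (2 * d) * ∑ k : Fin d, piInd (psiK d k) (toMat d f) +
    1 / 2 * piInd (psiSelf d) (toMat d f) := rfl
  have gen : ∀ (a P : ℝ), 0 < a → 0 < P → 1 / a * P ≤ priorPi d (toMat d f) →
      Real.log (1 / priorPi d (toMat d f)) ≤ Real.log a + Real.log (1 / P) := by
    intro a P ha hP h
    rw [← Real.log_mul ha.ne' (by positivity)]
    refine Real.log_le_log ?_ ?_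
    · have : 0 < priorPi d (toMat d f) := lt_of_lt_of_le (by positivity) h
      positivity
    · have := one_div_le_one_div_of_le (by positivity) h
      calc _ ≤ _ := this
        _ = _ := by field_simp
  -- self bound
  have b1 : Real.log (1 / priorPi d (toMat d f)) ≤
      3 + 2 * ((d - dSelf (toMat d f) : ℕ) : ℝ) * Real.log d := by
    have hA := log_prod_bound hd hself f (Finset.univ.filter fun i => f i = i) (by
      intro i hi
      rw [psiAll_self]
      have : f i = i := by simpa using hi
      simp only [psiSelf, this, if_true, mul_one]
      exact h3)
    have hc : dSelf (toMat d f) = (Finset.univ.filter fun i => f i = i).card := by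
      unfold dSelf
      simp only [toMat_row_eq]
      rw [Nat.card_eq_fintype_card, Fintype.card_subtype]
    rw [← hc, psiAll_self] at hA
    have := gen 2 _ (by norm_num) hS (by
      rw [hdef]
      have : 0 ≤ 1 / (2 * (d : ℝ)) * ∑ k : Fin d, piInd (psiK d k) (toMat d f) :=
        mul_nonneg (by positivity) (Finset.sum_nonneg fun k _ => (hK k).le)
      linarith)
    linarith
  have b2 : Real.log (1 / priorPi d (toMat d f)) ≤
      3 + 2 * ((d - dUnif (toMat d f) + 1 : ℕ) : ℝ) * Real.log d := by
    have hne : (Finset.univ : Finset (Fin d)).Nonempty := ⟨⟨0, by omega⟩, Finset.mem_univ _⟩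
    obtain ⟨i0, -, hi0⟩ := Finset.exists_mem_eq_sup Finset.univ hne
      (fun i : Fin d => Nat.card {j : Fin d // toMat d f j = toMat d f i})
    have hrow : toMat d f i0 = fun j' => if j' = f i0 then (1 : ℝ) else 0 :=
      (toMat_row_eq f i0 (f i0)).2 rfl
    have hc : dUnif (toMat d f) = (Finset.univ.filter fun i => f i = f i0).card := by
      unfold dUnif
      rw [hi0]
      simp only [hrow, toMat_row_eq]
      rw [Nat.card_eq_fintype_card, Fintype.card_subtype]
    have hA := log_prod_bound hd (hmemK (f i0)) f (Finset.univ.filter fun i => f i = f i0) (by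
      intro i hi
      rw [psiAll_eq_psiK]
      have : f i = f i0 := by simpa using hi
      simp only [psiK, this, if_true, mul_one]
      exact h3)
    rw [← hc, psiAll_eq_psiK] at hA
    have := gen (2 * d) _ (by positivity) (hK (f i0)) (by
      rw [hdef]
      have h1 : piInd (psiK d (f i0)) (toMat d f) ≤ ∑ k : Fin d, piInd (psiK d k) (toMat d f) :=
        Finset.single_le_sum (f := fun k => piInd (psiK d k) (toMat d f))
          (fun k _ => (hK k).le) (Finset.mem_univ _)
      have h2 := mul_le_mul_of_nonneg_left h1 (by positivity : 0 ≤ 1 / (2 * (d : ℝ)))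
      linarith)
    rw [Real.log_mul (by norm_num) hd0.ne'] at this
    push_cast
    nlinarith
  unfold cB
  rcases min_choice (d - dSelf (toMat d f)) (d - dUnif (toMat d f) + 1) with h | h <;> rw [h]
  · exact b1
  · exact b2

lemma exists_h {d : ℕ} (hd : 2 ≤ d) {L : ℝ} (hL : L ≤ 2 * (d : ℝ) ^ 2) (hL0 : 0 ≤ L) :
    ∃ h ∈ Finset.Icc 1 (2 * Nat.clog 2 d), L ≤ 2 * (2 : ℝ) ^ h ∧ (2 : ℝ) ^ h ≤ L + 2 := by
  classical
  have hc : 1 ≤ Nat.clog 2 d := Nat.clog_pos (by norm_num) hd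
  have hM : d ^ 2 ≤ 2 ^ (2 * Nat.clog 2 d) := by
    rw [mul_comm, pow_mul]
    exact Nat.pow_le_pow_left (Nat.le_pow_clog (by norm_num) d) 2
  have hM' : (d : ℝ) ^ 2 ≤ (2 : ℝ) ^ (2 * Nat.clog 2 d) := by exact_mod_cast hM
  have hex : ∃ h, 1 ≤ h ∧ L ≤ 2 * (2 : ℝ) ^ h := ⟨2 * Nat.clog 2 d, by omega, by linarith⟩
  have hspec := Nat.find_spec hex
  refine ⟨Nat.find hex, Finset.mem_Icc.2 ⟨hspec.1, Nat.find_min' hex ⟨by omega, by linarith⟩⟩,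
    hspec.2, ?_⟩
  set h := Nat.find hex with hh
  rcases Nat.lt_or_ge 1 h with h1 | h1
  · have := Nat.find_min hex (m := h - 1) (by omega)
    push Not at this
    have h2 := this (by omega)
    have : (2 : ℝ) ^ h = 2 * 2 ^ (h - 1) := by
      rw [← pow_succ']; congr 1; omega
    linarith
  · have : h = 1 := by omega
    rw [this]; linarith

lemma tune {L S T : ℝ} (hT : 0 < T) (hL : 0 ≤ L) (h1 : L ≤ 2 * S) (h2 : S ≤ L + 2) (hS : 0 < S) :
    L / Real.sqrt (S / T) + Real.sqrt (S / T) / 2 * T ≤ 2 * Real.sqrt (T * L) + Real.sqrt T := by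
  rw [Real.sqrt_div hS.le, Real.sqrt_mul hT.le]
  have hs := Real.sqrt_pos.2 hS
  have ht := Real.sqrt_pos.2 hT
  have hs2 := Real.sq_sqrt hS.le
  have ht2 := Real.sq_sqrt hT.le
  have hl := Real.sqrt_nonneg L
  have hl2 := Real.sq_sqrt hL
  set s := Real.sqrt S
  set τ := Real.sqrt T
  set l := Real.sqrt L
  rw [← hl2, ← ht2]
  rw [← hl2, ← hs2] at h1 h2
  have e : l ^ 2 / (s / τ) + s / τ / 2 * τ ^ 2 = τ * (l ^ 2 / s + s / 2) := by field_simp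
  rw [e]
  have a1 : l ≤ 3 / 2 * s := by
    apply le_of_sq_le_sq _ (by positivity)
    nlinarith
  have a1' : l ^ 2 / s ≤ 3 / 2 * l := by
    rw [div_le_iff₀ hs]; nlinarith
  have a2 : s ≤ l + 3 / 2 := by
    apply le_of_sq_le_sq _ (by positivity)
    nlinarith
  nlinarith


lemma lossInner_toMat {d : ℕ} (f : Fin d → Fin d) (p ℓ : Fin d → ℝ) :
    lossInner (toMat d f) p ℓ = ∑ i, p i * ℓ (f i) := by
  simp [lossInner, toMat]

lemma base_regret {d k T : ℕ} (hd : 2 ≤ d) (hk : k ∈ Finset.Icc 1 (d + 1)) (η : ℝ) (hη : 0 < η)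
    (ℓ p : ℕ → Fin d → ℝ) (Φ : ℕ → Matrix (Fin d) (Fin d) ℝ)
    (hℓ : ∀ t ∈ Finset.Icc 1 T, ∀ i, 0 ≤ ℓ t i ∧ ℓ t i ≤ 1)
    (hp : ∀ t ∈ Finset.Icc 1 T, InSimplex d (p t))
    (hΦ : ∀ t ∈ Finset.Icc 1 T, ∀ i j, Φ t i j =
      psiAll d k i j * Real.exp (-η * ∑ τ ∈ Finset.Ico 1 t, p τ i * ℓ τ j) /
        ∑ j', psiAll d k i j' * Real.exp (-η * ∑ τ ∈ Finset.Ico 1 t, p τ i * ℓ τ j'))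
    (f : Fin d → Fin d) :
    ∑ t ∈ Finset.Icc 1 T, (lossInner (Φ t) (p t) (ℓ t) - lossInner (toMat d f) (p t) (ℓ t)) ≤
      Real.log (1 / piInd (psiAll d k) (toMat d f)) / η + η / 2 * T := by
  have h1 : ∀ i : Fin d, ∑ t ∈ Finset.Icc 1 T,
      (∑ j, Φ t i j * (p t i * ℓ t j) - p t i * ℓ t (f i)) ≤
      Real.log (1 / psiAll d k i (f i)) / η + η / 2 * ∑ t ∈ Finset.Icc 1 T, p t i ^ 2 := by
    intro i
    refine mwu_regret Finset.univ (fun j => psiAll d k i j) (fun j _ => psiAll_pos hd hk i j)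
      (psiAll_sum hd hk i) η hη T (fun t j => p t i * ℓ t j) (fun t => p t i) ?_
      (fun t j => Φ t i j) (fun t ht j _ => hΦ t ht i j) (f i) (Finset.mem_univ _)
    intro t ht j _
    have a := (hp t ht).1 i
    have b := hℓ t ht j
    exact ⟨mul_nonneg a b.1, mul_le_of_le_one_right a b.2⟩
  have h2 := Finset.sum_le_sum (fun i (_ : i ∈ Finset.univ) => h1 i)
  rw [Finset.sum_comm, Finset.sum_add_distrib, ← Finset.sum_div, ← Finset.mul_sum,
    Finset.sum_comm (s := Finset.univ)] at h2
  rw [piInd_toMat, log_one_div_prod _ (fun i => psiAll_pos hd hk i _)]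
  have h3 : ∑ t ∈ Finset.Icc 1 T, ∑ i, p t i ^ 2 ≤ T := by
    calc _ ≤ ∑ t ∈ Finset.Icc 1 T, (1 : ℝ) := by
          refine Finset.sum_le_sum fun t ht => ?_
          obtain ⟨a, b⟩ := hp t ht
          rw [← b]
          refine Finset.sum_le_sum fun i _ => ?_
          have : p t i ≤ 1 := by
            rw [← b]; exact Finset.single_le_sum (fun i _ => a i) (Finset.mem_univ i)
          nlinarith [a i]
      _ = T := by simp
  have h4 := mul_le_mul_of_nonneg_left h3 (by positivity : 0 ≤ η / 2)
  have h5 : ∑ t ∈ Finset.Icc 1 T,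
      (lossInner (Φ t) (p t) (ℓ t) - lossInner (toMat d f) (p t) (ℓ t)) =
      ∑ t ∈ Finset.Icc 1 T, ∑ i, (∑ j, Φ t i j * (p t i * ℓ t j) - p t i * ℓ t (f i)) := by
    refine Finset.sum_congr rfl fun t _ => ?_
    rw [lossInner_toMat, lossInner, Finset.sum_sub_distrib]
  rw [h5]
  linarith

lemma lossInner_mem {d : ℕ} (φ : Matrix (Fin d) (Fin d) ℝ) (hφ : RowStochastic φ)
    (p ℓ : Fin d → ℝ) (hp : InSimplex d p) (hℓ : ∀ i, 0 ≤ ℓ i ∧ ℓ i ≤ 1) :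
    0 ≤ lossInner φ p ℓ ∧ lossInner φ p ℓ ≤ 1 := by
  constructor
  · exact Finset.sum_nonneg fun i _ => Finset.sum_nonneg fun j _ =>
      mul_nonneg ((hφ i).1 j) (mul_nonneg (hp.1 i) (hℓ j).1)
  · calc lossInner φ p ℓ ≤ ∑ i, ∑ j, φ i j * p i := by
          refine Finset.sum_le_sum fun i _ => Finset.sum_le_sum fun j _ => ?_
          exact mul_le_mul_of_nonneg_left (mul_le_of_le_one_right (hp.1 i) (hℓ j).2) ((hφ i).1 j)
      _ = 1 := by
          simp_rw [← Finset.sum_mul, (hφ _).2, one_mul]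
          exact hp.2

lemma qset_nonempty {d : ℕ} (φ : Matrix (Fin d) (Fin d) ℝ) (hφ : RowStochastic φ) :
    (QSet d φ).Nonempty := by
  classical
  refine ⟨fun f => ∏ i, φ i (f i), fun f => Finset.prod_nonneg fun i _ => (hφ i).1 _, ?_, ?_⟩
  · have := (Fintype.prod_sum (fun i j => φ i j)).symm
    rw [this]
    exact Finset.prod_eq_one fun i _ => (hφ i).2
  · intro i0 j0
    have h1 : ∀ f : Fin d → Fin d, (∏ i, φ i (f i)) * toMat d f i0 j0 =
        ∏ i, (φ i (f i) * if i = i0 then (if f i = j0 then 1 else 0) else 1) := by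
      intro f
      rw [Finset.prod_mul_distrib]
      simp [toMat]
    simp_rw [h1]
    have := (Fintype.prod_sum
      (fun i j => (φ i j * if i = i0 then (if j = j0 then (1 : ℝ) else 0) else 1))).symm
    rw [this, Finset.prod_eq_single i0]
    · simp
    · intro i _ hi
      simp [hi, (hφ i).2]
    · simp

lemma log_N_le {d : ℕ} (hd : 2 ≤ d) :
    0 < Real.log ((d + 1 : ℝ) * (2 * Nat.clog 2 d : ℝ)) ∧
    Real.log ((d + 1 : ℝ) * (2 * Nat.clog 2 d : ℝ)) ≤ 4 * Real.log d := by
  have hd2 : (2 : ℝ) ≤ d := by exact_mod_cast hd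
  have hc : 1 ≤ Nat.clog 2 d := Nat.clog_pos (by norm_num) hd
  have hc' : (1 : ℝ) ≤ Nat.clog 2 d := by exact_mod_cast hc
  have hc2 : Nat.clog 2 d ≤ d := Nat.clog_le_of_le_pow (Nat.lt_two_pow_self).le
  have hc2' : (Nat.clog 2 d : ℝ) ≤ d := by exact_mod_cast hc2
  constructor
  · apply Real.log_pos; nlinarith
  · rw [show (4 : ℝ) * Real.log d = Real.log ((d : ℝ) ^ 4) by rw [Real.log_pow]; norm_num]
    refine Real.log_le_log (by positivity) ?_
    calc _ ≤ ((d : ℝ) ^ 2) * ((d : ℝ) ^ 2) := by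
          apply mul_le_mul <;> nlinarith
      _ = _ := by ring

lemma combined_regret {d T : ℕ} (hd : 2 ≤ d) (hT : 1 ≤ T) (w : ℕ → ℕ → ℕ → ℝ)
    (g : ℕ → ℕ → ℕ → ℝ)
    (hg : ∀ t ∈ Finset.Icc 1 T, ∀ k ∈ Finset.Icc 1 (d + 1),
      ∀ h ∈ Finset.Icc 1 (2 * Nat.clog 2 d), 0 ≤ g k h t ∧ g k h t ≤ 1)
    (hw1 : ∀ k ∈ Finset.Icc 1 (d + 1), ∀ h ∈ Finset.Icc 1 (2 * Nat.clog 2 d),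
          w 1 k h = 1 / ((d + 1 : ℝ) * (2 * Nat.clog 2 d : ℝ)))
    (hw : ∀ t ∈ Finset.Icc 1 T, ∀ k ∈ Finset.Icc 1 (d + 1),
          ∀ h ∈ Finset.Icc 1 (2 * Nat.clog 2 d),
            w (t + 1) k h =
              w t k h *
                  Real.exp (-Real.sqrt (Real.log ((d + 1 : ℝ) * (2 * Nat.clog 2 d : ℝ)) / (T : ℝ)) *
                    g k h t) /
                ∑ k' ∈ Finset.Icc 1 (d + 1), ∑ h' ∈ Finset.Icc 1 (2 * Nat.clog 2 d),
                  w t k' h' *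
                    Real.exp (-Real.sqrt (Real.log ((d + 1 : ℝ) * (2 * Nat.clog 2 d : ℝ)) / (T : ℝ)) *
                      g k' h' t))
    (k h : ℕ) (hk : k ∈ Finset.Icc 1 (d + 1)) (hh : h ∈ Finset.Icc 1 (2 * Nat.clog 2 d)) :
    ∑ t ∈ Finset.Icc 1 T, (∑ k' ∈ Finset.Icc 1 (d + 1),
      ∑ h' ∈ Finset.Icc 1 (2 * Nat.clog 2 d), w t k' h' * g k' h' t - g k h t) ≤
      3 * Real.sqrt (T * Real.log d) := by
  have hT0 : (0 : ℝ) < T := by exact_mod_cast hT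
  obtain ⟨hN0, hN⟩ := log_N_le hd
  have hc : 1 ≤ Nat.clog 2 d := Nat.clog_pos (by norm_num) hd
  have hc' : (1 : ℝ) ≤ Nat.clog 2 d := by exact_mod_cast hc
  set N := (d + 1 : ℝ) * (2 * Nat.clog 2 d : ℝ) with hNdef
  have hNpos : 0 < N := by positivity
  set η := Real.sqrt (Real.log N / (T : ℝ)) with hη
  have hηpos : 0 < η := Real.sqrt_pos.2 (by positivity)
  set s := Finset.Icc 1 (d + 1) ×ˢ Finset.Icc 1 (2 * Nat.clog 2 d) with hs
  have hsplit : ∀ F : ℕ → ℕ → ℝ, ∑ k' ∈ Finset.Icc 1 (d + 1),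
      ∑ h' ∈ Finset.Icc 1 (2 * Nat.clog 2 d), F k' h' = ∑ a ∈ s, F a.1 a.2 := by
    intro F; rw [hs, Finset.sum_product]
  have hw1' : ∀ a ∈ s, w 1 a.1 a.2 = 1 / N := fun a ha =>
    hw1 _ (Finset.mem_product.1 ha).1 _ (Finset.mem_product.1 ha).2
  have hpos : ∀ a ∈ s, 0 < w 1 a.1 a.2 := fun a ha => by rw [hw1' a ha]; positivity
  have hsum : ∑ a ∈ s, w 1 a.1 a.2 = 1 := by
    rw [Finset.sum_congr rfl hw1']
    simp only [Finset.sum_const, hs, Finset.card_product, Nat.card_Icc, nsmul_eq_mul]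
    simp only [Nat.add_sub_cancel]
    push_cast
    rw [← hNdef]
    field_simp
  have hcl := mwu_closed s η T (fun t a => g a.1 a.2 t) (fun t a => w t a.1 a.2) hpos hsum (by
    intro t ht a ha
    have := hw t ht a.1 (Finset.mem_product.1 ha).1 a.2 (Finset.mem_product.1 ha).2
    rw [hsplit] at this
    exact this)
  have hmem : (k, h) ∈ s := Finset.mem_product.2 ⟨hk, hh⟩
  have hr := mwu_regret s (fun a => w 1 a.1 a.2) hpos hsum η hηpos T (fun t a => g a.1 a.2 t)
    (fun _ => 1) (by
      intro t ht a ha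
      exact hg t ht a.1 (Finset.mem_product.1 ha).1 a.2 (Finset.mem_product.1 ha).2)
    (fun t a => w t a.1 a.2) hcl (k, h) hmem
  simp only [hsplit]
  refine hr.trans ?_
  have e1 : w 1 k h = 1 / N := hw1' (k, h) hmem
  simp only [e1, one_div_one_div, one_pow, Finset.sum_const, Nat.card_Icc, Nat.add_sub_cancel,
    nsmul_eq_mul, mul_one]
  have hη2 : η ^ 2 * T = Real.log N := by
    rw [hη, Real.sq_sqrt (by positivity)]; field_simp
  have e2 : Real.log N / η + η / 2 * T = 3 / 2 * (η * T) := by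
    rw [← hη2]; field_simp; ring
  rw [e2]
  have e3 : η * T ≤ 2 * Real.sqrt (T * Real.log d) := by
    have hld : 0 ≤ Real.log d := by linarith
    apply le_of_sq_le_sq _ (by positivity)
    rw [mul_pow, mul_pow, Real.sq_sqrt (mul_nonneg hT0.le hld)]
    nlinarith
  linarith

/-- The meta MWU algorithm over `(d+1)·M` prior-aware BM-reductions (base
learner `(k,h)` is the prior-aware BM-reduction with prior `ψ^k` and learning rate
`η_h = √(2^h/T)`; the meta learner is MWU with uniform prior and rate `√(log((d+1)M)/T)`; the
played `p_t` is a stationary distribution of the weighted average matrix) achieves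
comparator-adaptive Φ-regret: there are universal `C, C' > 0` such that, for all `d ≥ 2`,
`T ≥ 1` and losses in `[0,1]^d`, `Reg(φ) ≤ C (√(T log(1/π(φ))) + √(T log d))` for every
`φ ∈ Φ_b`, and consequently `Reg(φ) ≤ C' (√((1 + c_φ log d) T) + √(T log d))` for every
row-stochastic `φ`. -/
theorem stmt14 :
    ∃ C > (0 : ℝ), ∃ C' > (0 : ℝ),
      ∀ (d T : ℕ), 2 ≤ d → 1 ≤ T →
      ∀ (ℓ p : ℕ → Fin d → ℝ) (Φ : ℕ → ℕ → ℕ → Matrix (Fin d) (Fin d) ℝ)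
        (w : ℕ → ℕ → ℕ → ℝ),
        (∀ t ∈ Finset.Icc 1 T, ∀ i, 0 ≤ ℓ t i ∧ ℓ t i ≤ 1) →
        (∀ t ∈ Finset.Icc 1 T, InSimplex d (p t)) →
        -- base learner `(k,h)`: prior-aware BM-reduction with prior `ψ^k` and rate `√(2^h/T)`
        (∀ k ∈ Finset.Icc 1 (d + 1), ∀ h ∈ Finset.Icc 1 (2 * Nat.clog 2 d),
          ∀ t ∈ Finset.Icc 1 T, ∀ i j,
            Φ k h t i j =
              psiAll d k i j *
                  Real.exp (-Real.sqrt ((2 : ℝ) ^ h / (T : ℝ)) *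
                    ∑ τ ∈ Finset.Ico 1 t, p τ i * ℓ τ j) /
                ∑ j', psiAll d k i j' *
                  Real.exp (-Real.sqrt ((2 : ℝ) ^ h / (T : ℝ)) *
                    ∑ τ ∈ Finset.Ico 1 t, p τ i * ℓ τ j')) →
        -- meta learner: MWU over the `(d+1)·M` base learners with uniform prior
        (∀ k ∈ Finset.Icc 1 (d + 1), ∀ h ∈ Finset.Icc 1 (2 * Nat.clog 2 d),
          w 1 k h = 1 / ((d + 1 : ℝ) * (2 * Nat.clog 2 d : ℝ))) →
        (∀ t ∈ Finset.Icc 1 T, ∀ k ∈ Finset.Icc 1 (d + 1),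
          ∀ h ∈ Finset.Icc 1 (2 * Nat.clog 2 d),
            w (t + 1) k h =
              w t k h *
                  Real.exp (-Real.sqrt (Real.log ((d + 1 : ℝ) * (2 * Nat.clog 2 d : ℝ)) / (T : ℝ)) *
                    lossInner (Φ k h t) (p t) (ℓ t)) /
                ∑ k' ∈ Finset.Icc 1 (d + 1), ∑ h' ∈ Finset.Icc 1 (2 * Nat.clog 2 d),
                  w t k' h' *
                    Real.exp (-Real.sqrt (Real.log ((d + 1 : ℝ) * (2 * Nat.clog 2 d : ℝ)) / (T : ℝ)) *
                      lossInner (Φ k' h' t) (p t) (ℓ t))) →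
        -- `p_t` is a stationary distribution of `φ_t = Σ_{(k,h)} w_{t,(k,h)} φ_t^{k,h}`
        (∀ t ∈ Finset.Icc 1 T, ∀ i,
          p t i = ∑ j, (∑ k ∈ Finset.Icc 1 (d + 1), ∑ h ∈ Finset.Icc 1 (2 * Nat.clog 2 d),
            w t k h * Φ k h t j i) * p t j) →
        (∀ φ ∈ PhiB d,
          (∑ t ∈ Finset.Icc 1 T, ∑ i, (p t i - ∑ j, φ j i * p t j) * ℓ t i) ≤
            C * (Real.sqrt ((T : ℝ) * Real.log (1 / priorPi d φ)) +
              Real.sqrt ((T : ℝ) * Real.log d))) ∧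
        (∀ φ : Matrix (Fin d) (Fin d) ℝ, RowStochastic φ →
          (∑ t ∈ Finset.Icc 1 T, ∑ i, (p t i - ∑ j, φ j i * p t j) * ℓ t i) ≤
            C' * (Real.sqrt ((1 + cGen d φ * Real.log d) * (T : ℝ)) +
              Real.sqrt ((T : ℝ) * Real.log d))) := by
  refine ⟨5, by norm_num, 10, by norm_num, ?_⟩
  intro d T hd hT ℓ p Φ w hℓ hp hΦ hw1 hw hstat
  have hT0 : (0 : ℝ) < T := by exact_mod_cast hT
  have hd2 : (2 : ℝ) ≤ d := by exact_mod_cast hd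
  have hlogd : 1 / 2 ≤ Real.log d := by
    have h1 := Real.log_two_gt_d9
    have h2 := Real.log_le_log (by norm_num) hd2
    linarith
  have hlogd0 : 0 ≤ Real.log d := by linarith
  -- regret as a linear function of `φ`
  have hreg : ∀ φ : Matrix (Fin d) (Fin d) ℝ, ∀ t,
      ∑ i, (p t i - ∑ j, φ j i * p t j) * ℓ t i =
        ∑ i, p t i * ℓ t i - lossInner φ (p t) (ℓ t) := by
    intro φ t
    simp only [sub_mul, Finset.sum_sub_distrib, lossInner]
    congr 1
    rw [Finset.sum_comm]
    refine Finset.sum_congr rfl fun i _ => ?_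
    rw [Finset.sum_mul]
    exact Finset.sum_congr rfl fun j _ => by ring
  have hplay : ∀ t ∈ Finset.Icc 1 T, ∑ i, p t i * ℓ t i =
      ∑ k' ∈ Finset.Icc 1 (d + 1), ∑ h' ∈ Finset.Icc 1 (2 * Nat.clog 2 d),
        w t k' h' * lossInner (Φ k' h' t) (p t) (ℓ t) := by
    intro t ht
    have h1 := hreg (fun j i => ∑ k ∈ Finset.Icc 1 (d + 1),
      ∑ h ∈ Finset.Icc 1 (2 * Nat.clog 2 d), w t k h * Φ k h t j i) t
    have h2 : ∑ i, (p t i - ∑ j, (∑ k ∈ Finset.Icc 1 (d + 1),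
      ∑ h ∈ Finset.Icc 1 (2 * Nat.clog 2 d), w t k h * Φ k h t j i) * p t j) * ℓ t i = 0 := by
      refine Finset.sum_eq_zero fun i _ => ?_
      rw [← hstat t ht i]; ring
    rw [h2] at h1
    rw [sub_eq_zero.1 h1.symm]
    simp only [lossInner, Finset.sum_mul, Finset.mul_sum]
    calc _ = ∑ i, ∑ k' ∈ Finset.Icc 1 (d + 1), ∑ j, ∑ h' ∈ Finset.Icc 1 (2 * Nat.clog 2 d),
            w t k' h' * Φ k' h' t i j * (p t i * ℓ t j) :=
          Finset.sum_congr rfl fun i _ => Finset.sum_comm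
      _ = ∑ k' ∈ Finset.Icc 1 (d + 1), ∑ i, ∑ j, ∑ h' ∈ Finset.Icc 1 (2 * Nat.clog 2 d),
            w t k' h' * Φ k' h' t i j * (p t i * ℓ t j) := Finset.sum_comm
      _ = ∑ k' ∈ Finset.Icc 1 (d + 1), ∑ i, ∑ h' ∈ Finset.Icc 1 (2 * Nat.clog 2 d), ∑ j,
            w t k' h' * Φ k' h' t i j * (p t i * ℓ t j) :=
          Finset.sum_congr rfl fun k' _ => Finset.sum_congr rfl fun i _ => Finset.sum_comm
      _ = ∑ k' ∈ Finset.Icc 1 (d + 1), ∑ h' ∈ Finset.Icc 1 (2 * Nat.clog 2 d), ∑ i, ∑ j,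
            w t k' h' * Φ k' h' t i j * (p t i * ℓ t j) :=
          Finset.sum_congr rfl fun k' _ => Finset.sum_comm
      _ = _ := by simp only [mul_assoc]
  have hrow : ∀ t ∈ Finset.Icc 1 T, ∀ k ∈ Finset.Icc 1 (d + 1),
      ∀ h ∈ Finset.Icc 1 (2 * Nat.clog 2 d), RowStochastic (Φ k h t) := by
    intro t ht k hk h hh i
    have hpos : ∀ j, 0 < psiAll d k i j * Real.exp (-Real.sqrt ((2 : ℝ) ^ h / (T : ℝ)) *
        ∑ τ ∈ Finset.Ico 1 t, p τ i * ℓ τ j) :=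
      fun j => mul_pos (psiAll_pos hd hk i j) (Real.exp_pos _)
    have hZ := Finset.sum_pos (fun j (_ : j ∈ Finset.univ) => hpos j) ⟨i, Finset.mem_univ i⟩
    constructor
    · intro j
      rw [hΦ k hk h hh t ht i j]
      exact div_nonneg (hpos j).le hZ.le
    · rw [Finset.sum_congr rfl fun j _ => hΦ k hk h hh t ht i j, ← Finset.sum_div]
      exact div_self hZ.ne'
  have main : ∀ f : Fin d → Fin d,
      (∑ t ∈ Finset.Icc 1 T, ∑ i, (p t i - ∑ j, toMat d f j i * p t j) * ℓ t i) ≤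
        5 * (Real.sqrt ((T : ℝ) * Real.log (1 / priorPi d (toMat d f))) +
              Real.sqrt ((T : ℝ) * Real.log d)) := by
    intro f
    obtain ⟨-, k, hk, hkle⟩ := exists_k hd f
    obtain ⟨hL0, hL⟩ := log_piInd_bounds hd hk f
    obtain ⟨h, hh, hh1, hh2⟩ := exists_h hd hL hL0
    have hb := base_regret hd hk (Real.sqrt ((2 : ℝ) ^ h / (T : ℝ)))
      (Real.sqrt_pos.2 (by positivity)) ℓ p (Φ k h) hℓ hp (hΦ k hk h hh) f
    have ht := tune hT0 hL0 hh1 hh2 (by positivity)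
    have hm := combined_regret hd hT w (fun k h t => lossInner (Φ k h t) (p t) (ℓ t))
      (fun t ht k hk h hh => lossInner_mem _ (hrow t ht k hk h hh) _ _ (hp t ht) (hℓ t ht))
      hw1 hw k h hk hh
    have e : (∑ t ∈ Finset.Icc 1 T, ∑ i, (p t i - ∑ j, toMat d f j i * p t j) * ℓ t i) =
        ∑ t ∈ Finset.Icc 1 T, (∑ k' ∈ Finset.Icc 1 (d + 1),
          ∑ h' ∈ Finset.Icc 1 (2 * Nat.clog 2 d),
            w t k' h' * lossInner (Φ k' h' t) (p t) (ℓ t) - lossInner (Φ k h t) (p t) (ℓ t)) +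
        ∑ t ∈ Finset.Icc 1 T, (lossInner (Φ k h t) (p t) (ℓ t) -
          lossInner (toMat d f) (p t) (ℓ t)) := by
      rw [← Finset.sum_add_distrib]
      refine Finset.sum_congr rfl fun t ht => ?_
      rw [hreg, hplay t ht]; ring
    rw [e]
    have s1 : Real.sqrt (T * Real.log (1 / piInd (psiAll d k) (toMat d f))) ≤
        Real.sqrt (T * Real.log (1 / priorPi d (toMat d f))) :=
      Real.sqrt_le_sqrt (mul_le_mul_of_nonneg_left hkle hT0.le)
    have s2 : Real.sqrt T ≤ 2 * Real.sqrt (T * Real.log d) := by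
      apply le_of_sq_le_sq _ (by positivity)
      rw [mul_pow, Real.sq_sqrt hT0.le, Real.sq_sqrt (by positivity)]
      nlinarith
    have s3 := Real.sqrt_nonneg (T * Real.log (1 / priorPi d (toMat d f)))
    linarith
  refine ⟨?_, ?_⟩
  · intro φ hφ
    obtain ⟨f, rfl⟩ := mem_PhiB hφ
    exact main f
  · intro φ hφ
    -- bound for every decomposition
    have hq : ∀ q ∈ QSet d φ,
        (∑ t ∈ Finset.Icc 1 T, ∑ i, (p t i - ∑ j, φ j i * p t j) * ℓ t i) ≤
          10 * (Real.sqrt ((1 + (∑ f : Fin d → Fin d, q f * (cB (toMat d f) : ℝ)) *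
            Real.log d) * (T : ℝ)) + Real.sqrt ((T : ℝ) * Real.log d)) := by
      rintro q ⟨hq0, hq1, hq2⟩
      have hlin : (∑ t ∈ Finset.Icc 1 T, ∑ i, (p t i - ∑ j, φ j i * p t j) * ℓ t i) =
          ∑ f, q f * ∑ t ∈ Finset.Icc 1 T, ∑ i, (p t i - ∑ j, toMat d f j i * p t j) * ℓ t i := by
        simp only [hreg]
        simp only [Finset.mul_sum]
        rw [Finset.sum_comm]
        refine Finset.sum_congr rfl fun t _ => ?_
        simp only [mul_sub, Finset.sum_sub_distrib]
        rw [← Finset.sum_mul, hq1, one_mul]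
        congr 1
        simp only [lossInner, ← hq2, Finset.mul_sum, Finset.sum_mul]
        rw [Finset.sum_comm (s := (Finset.univ : Finset (Fin d → Fin d)))]
        refine Finset.sum_congr rfl fun i _ => ?_
        rw [Finset.sum_comm (s := (Finset.univ : Finset (Fin d → Fin d)))]
        refine Finset.sum_congr rfl fun j _ => ?_
        exact Finset.sum_congr rfl fun f _ => by ring
      rw [hlin]
      have hstep : ∀ f : Fin d → Fin d,
          (∑ t ∈ Finset.Icc 1 T, ∑ i, (p t i - ∑ j, toMat d f j i * p t j) * ℓ t i) ≤
          10 * (Real.sqrt ((1 + (cB (toMat d f) : ℝ) * Real.log d) * T) +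
            Real.sqrt ((T : ℝ) * Real.log d)) := by
        intro f
        refine (main f).trans ?_
        have hc0 : 0 ≤ (cB (toMat d f) : ℝ) * Real.log d := by positivity
        have s1 : Real.sqrt (T * Real.log (1 / priorPi d (toMat d f))) ≤
            2 * Real.sqrt ((1 + (cB (toMat d f) : ℝ) * Real.log d) * T) := by
          rw [show (2 : ℝ) = Real.sqrt 4 by
            rw [show (4 : ℝ) = 2 ^ 2 by norm_num]; simp, ← Real.sqrt_mul (by norm_num)]
          apply Real.sqrt_le_sqrt
          have := log_prior_le hd f
          nlinarith
        have s2 := Real.sqrt_nonneg ((T : ℝ) * Real.log d)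
        linarith
      have hjensen := Real.strictConcaveOn_sqrt.concaveOn.le_map_sum
        (t := (Finset.univ : Finset (Fin d → Fin d))) (w := q)
        (p := fun f => (1 + (cB (toMat d f) : ℝ) * Real.log d) * T)
        (fun f _ => hq0 f) hq1 (fun f _ => by
          show (0 : ℝ) ≤ _
          positivity)
      simp only [smul_eq_mul] at hjensen
      have e : ∑ f, q f * ((1 + (cB (toMat d f) : ℝ) * Real.log d) * T) =
          (1 + (∑ f : Fin d → Fin d, q f * (cB (toMat d f) : ℝ)) * Real.log d) * T := by
        calc _ = ∑ f, (q f * T + q f * (cB (toMat d f) : ℝ) * Real.log d * T) :=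
              Finset.sum_congr rfl fun f _ => by ring
          _ = _ := by
              rw [Finset.sum_add_distrib, ← Finset.sum_mul, ← Finset.sum_mul, ← Finset.sum_mul, hq1]
              ring
      rw [e] at hjensen
      calc _ ≤ ∑ f, q f * (10 * (Real.sqrt ((1 + (cB (toMat d f) : ℝ) * Real.log d) * T) +
            Real.sqrt ((T : ℝ) * Real.log d))) :=
            Finset.sum_le_sum fun f _ => mul_le_mul_of_nonneg_left (hstep f) (hq0 f)
        _ = 10 * ((∑ f, q f * Real.sqrt ((1 + (cB (toMat d f) : ℝ) * Real.log d) * T)) +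
            (∑ f, q f) * Real.sqrt ((T : ℝ) * Real.log d)) := by
            rw [Finset.sum_mul, ← Finset.sum_add_distrib, Finset.mul_sum]
            exact Finset.sum_congr rfl fun f _ => by ring
        _ ≤ _ := by rw [hq1]; linarith
    have hne : ((fun q => ∑ f : Fin d → Fin d, q f * (cB (toMat d f) : ℝ)) '' QSet d φ).Nonempty :=
      (qset_nonempty φ hφ).image _
    have hbdd : BddBelow
        ((fun q => ∑ f : Fin d → Fin d, q f * (cB (toMat d f) : ℝ)) '' QSet d φ) := by
      refine ⟨0, ?_⟩
      rintro _ ⟨q, hq, rfl⟩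
      exact Finset.sum_nonneg fun f _ => mul_nonneg (hq.1 f) (Nat.cast_nonneg _)
    have hmono : Monotone (fun x : ℝ => 10 * (Real.sqrt ((1 + x * Real.log d) * (T : ℝ)) +
        Real.sqrt ((T : ℝ) * Real.log d))) := by
      intro x y hxy
      simp only
      gcongr
    have hcont : Continuous (fun x : ℝ => 10 * (Real.sqrt ((1 + x * Real.log d) * (T : ℝ)) +
        Real.sqrt ((T : ℝ) * Real.log d))) := by fun_prop
    have hmap := hmono.map_csInf_of_continuousAt hcont.continuousAt hne hbdd
    unfold cGen
    refine le_trans ?_ hmap.ge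
    refine le_csInf (hne.image _) ?_
    rintro _ ⟨_, ⟨q, hqm, rfl⟩, rfl⟩
    exact hq q hqm
end

section
/- In an N-player normal-form game where each player has d actions and losses bounded in [−1,1], the change in any player's expected loss vector between consecutive rounds is controlled by the other players' strategy changes: ‖ℓ_t^{(n)} − ℓ_{t−1}^{(n)}‖_∞² ≤ (N−1) · Σ_{j ≠ n} ‖p_t^{(j)} − p_{t−1}^{(j)}‖_1² for every round t and player n. -/
open Finset

/-- Player `n`'s expected loss for action `a` when the other players play the mixed strategies
`p j`: `ℓ_a^{(n)} = Σ_{a^{(−n)}} (Π_{j ≠ n} p_{a_j}^{(j)}) ℓ^{(n)}(a, a^{(−n)})`. -/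
noncomputable def expLoss (N d : ℕ) (n : Fin N) (loss : (Fin N → Fin d) → ℝ)
    (p : Fin N → Fin d → ℝ) (a : Fin d) : ℝ :=
  ∑ σ : {j : Fin N // j ≠ n} → Fin d,
    (∏ j : {j : Fin N // j ≠ n}, p j.1 (σ j)) *
      loss fun j => if h : j = n then a else σ ⟨j, h⟩

theorem aux_step {ι : Type*} [Fintype ι] [DecidableEq ι] (d : ℕ) (f : ι → Fin d → ℝ)
    (hf : ∀ j, InSimplex d (f j)) (k : ι) (u : Fin d → ℝ) :
    ∑ σ : ι → Fin d, |∏ j, Function.update f k u j (σ j) - ∏ j, f j (σ j)|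
      = ∑ i, |u i - f k i| := by
  have h1 : ∀ σ : ι → Fin d, |∏ j, Function.update f k u j (σ j) - ∏ j, f j (σ j)|
      = ∏ j, (Function.update f k (fun i => |u i - f k i|)) j (σ j) := by
    intro σ
    have e : ∀ v : Fin d → ℝ, ∏ j, Function.update f k v j (σ j)
        = v (σ k) * ∏ j ∈ univ.erase k, f j (σ j) := by
      intro v
      rw [← Finset.mul_prod_erase univ _ (Finset.mem_univ k)]
      congr 1
      · simp
      · refine Finset.prod_congr rfl fun j hj => ?_
        rw [Function.update_of_ne (Finset.ne_of_mem_erase hj)]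
    have e2 := e (f k)
    rw [Function.update_eq_self] at e2
    rw [e, e, e2, ← sub_mul, abs_mul]
    congr 1
    exact abs_of_nonneg (Finset.prod_nonneg fun j _ => (hf j).1 _)
  rw [Finset.sum_congr rfl fun σ _ => h1 σ]
  have h2 := Finset.prod_univ_sum (fun _ : ι => (univ : Finset (Fin d)))
    (Function.update f k (fun i => |u i - f k i|))
  rw [Fintype.piFinset_univ] at h2
  rw [← h2, ← Finset.mul_prod_erase univ _ (Finset.mem_univ k)]
  rw [Finset.prod_eq_one, mul_one]
  · simp
  · intro j hj
    rw [Function.update_of_ne (Finset.ne_of_mem_erase hj)]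
    exact (hf j).2

theorem aux_tv {ι : Type*} [Fintype ι] [DecidableEq ι] (d : ℕ) (p q : ι → Fin d → ℝ)
    (hp : ∀ j, InSimplex d (p j)) (hq : ∀ j, InSimplex d (q j)) :
    ∑ σ : ι → Fin d, |∏ j, p j (σ j) - ∏ j, q j (σ j)| ≤ ∑ j, ∑ i, |p j i - q j i| := by
  have key : ∀ S : Finset ι,
      ∑ σ : ι → Fin d, |∏ j, (S.piecewise p q) j (σ j) - ∏ j, q j (σ j)|
        ≤ ∑ j ∈ S, ∑ i, |p j i - q j i| := by
    intro S
    induction S using Finset.induction_on with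
    | empty => simp
    | insert k S hk ih =>
      rw [Finset.sum_insert hk, Finset.piecewise_insert]
      have hs : ∀ j, InSimplex d (S.piecewise p q j) := by
        intro j
        by_cases h : j ∈ S
        · simpa [h] using hp j
        · simpa [h] using hq j
      have h := aux_step d (S.piecewise p q) hs k (p k)
      rw [Finset.piecewise_eq_of_notMem S p q hk] at h
      rw [← h]
      refine le_trans ?_ (add_le_add le_rfl ih)
      rw [← Finset.sum_add_distrib]
      exact Finset.sum_le_sum fun σ _ => abs_sub_le _ _ _
  simpa using key univ

/-- In an `N`-player game with `d` actions per player and losses in `[−1,1]`,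
the change of any player's expected loss vector between consecutive rounds satisfies
`‖ℓ_t^{(n)} − ℓ_{t−1}^{(n)}‖_∞² ≤ (N−1) Σ_{j ≠ n} ‖p_t^{(j)} − p_{t−1}^{(j)}‖_1²`. -/
theorem stmt16 (N d : ℕ) (hN : 1 ≤ N) (hd : 1 ≤ d)
    (loss : Fin N → (Fin N → Fin d) → ℝ)
    (hloss : ∀ n a, |loss n a| ≤ 1)
    (pPrev pCur : Fin N → Fin d → ℝ)
    (hPrev : ∀ j, InSimplex d (pPrev j)) (hCur : ∀ j, InSimplex d (pCur j))
    (n : Fin N) :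
    (⨆ a : Fin d, |expLoss N d n (loss n) pCur a - expLoss N d n (loss n) pPrev a|) ^ 2 ≤
      ((N : ℝ) - 1) *
        ∑ j ∈ Finset.univ.erase n, (∑ i, |pCur j i - pPrev j i|) ^ 2 := by
  have hsum : ∀ g : Fin N → ℝ, ∑ j : {j : Fin N // j ≠ n}, g j.1 = ∑ j ∈ univ.erase n, g j := by
    intro g
    exact (Finset.sum_subtype (univ.erase n) (by simp) g).symm
  have hb : ∀ a, |expLoss N d n (loss n) pCur a - expLoss N d n (loss n) pPrev a| ≤
      ∑ j ∈ univ.erase n, ∑ i, |pCur j i - pPrev j i| := by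
    intro a
    rw [← hsum]
    refine le_trans ?_ (aux_tv d (fun j : {j : Fin N // j ≠ n} => pCur j.1) (fun j => pPrev j.1)
      (fun j => hCur j.1) (fun j => hPrev j.1))
    unfold expLoss
    rw [← Finset.sum_sub_distrib]
    refine (Finset.abs_sum_le_sum_abs _ _).trans (Finset.sum_le_sum fun σ _ => ?_)
    rw [← sub_mul, abs_mul]
    exact mul_le_of_le_one_right (abs_nonneg _) (hloss _ _)
  have hne : Nonempty (Fin d) := ⟨⟨0, hd⟩⟩
  have h1 := ciSup_le hb
  have h0 : 0 ≤ ⨆ a : Fin d, |expLoss N d n (loss n) pCur a - expLoss N d n (loss n) pPrev a| :=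
    Real.iSup_nonneg fun a => abs_nonneg _
  refine (pow_le_pow_left₀ h0 h1 2).trans ?_
  have h2 := sq_sum_le_card_mul_sum_sq (s := univ.erase n)
    (f := fun j => ∑ i, |pCur j i - pPrev j i|)
  rw [Finset.card_erase_of_mem (Finset.mem_univ n), Finset.card_univ, Fintype.card_fin,
    Nat.cast_sub hN, Nat.cast_one] at h2
  exact h2
end

section
/- Optimistic MWU iterates are multiplicatively stable: let K ≥ 1, G > 0, and 0 < η ≤ 1/(8G). Let ŵ_1 ∈ Δ(K) have full support and let ℓ_t, m_t ∈ [0, G]^K for all t. Define w_{t,k} ∝ ŵ_{t,k}·exp(−η m_{t,k}) and ŵ_{t+1,k} ∝ ŵ_{t,k}·exp(−η ℓ_{t,k}). Then for every t ≥ 2 and every coordinate k ∈ [K], (1/2)·w_{t−1,k} ≤ w_{t,k} ≤ 2·w_{t−1,k}. -/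
open Finset

/-- Normalizations of comparable positive vectors are comparable. -/
theorem normalize_stable {K : ℕ} (a b : Fin K → ℝ) (hb : ∀ j, 0 < b j)
    (hl : ∀ j, 3 / 4 * b j ≤ a j) (hu : ∀ j, a j ≤ 3 / 2 * b j) (k : Fin K) :
    (1 / 2) * (b k / ∑ j, b j) ≤ a k / ∑ j, a j ∧ a k / ∑ j, a j ≤ 2 * (b k / ∑ j, b j) := by
  have hB : 0 < ∑ j, b j := Finset.sum_pos (fun j _ => hb j) ⟨k, Finset.mem_univ k⟩
  have hL : 3 / 4 * ∑ j, b j ≤ ∑ j, a j := by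
    rw [Finset.mul_sum]; exact Finset.sum_le_sum fun j _ => hl j
  have hU : ∑ j, a j ≤ 3 / 2 * ∑ j, b j := by
    rw [Finset.mul_sum]; exact Finset.sum_le_sum fun j _ => hu j
  have hbk := hb k
  have hlk := hl k
  have huk := hu k
  generalize (∑ j, b j) = B at *
  generalize (∑ j, a j) = A at *
  have hA : 0 < A := by linarith
  constructor
  · rw [← mul_div_assoc, div_le_div_iff₀ hB hA]
    nlinarith [mul_le_mul_of_nonneg_left hU hbk.le, mul_le_mul_of_nonneg_right hlk hB.le]
  · rw [← mul_div_assoc, div_le_div_iff₀ hA hB]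
    nlinarith [mul_le_mul_of_nonneg_left hL hbk.le, mul_le_mul_of_nonneg_right huk hB.le]

/-- Bounds on the exponential factor. -/
theorem exp_factor_bounds (x : ℝ) (h1 : -(1 / 4) ≤ x) (h2 : x ≤ 1 / 8) :
    3 / 4 ≤ Real.exp x ∧ Real.exp x ≤ 3 / 2 := by
  constructor
  · linarith [Real.add_one_le_exp x]
  · have h := Real.add_one_le_exp (-x)
    have h3 : Real.exp x * Real.exp (-x) = 1 := by rw [← Real.exp_add]; simp
    nlinarith [Real.exp_pos x]

/-- Optimistic MWU iterates are multiplicatively stable: with `0 < η ≤ 1/(8G)`,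
losses and predictions in `[0,G]^K`, full-support `ŵ_1 ∈ Δ(K)`, and updates
`w_{t,k} ∝ ŵ_{t,k} e^{−η m_{t,k}}`, `ŵ_{t+1,k} ∝ ŵ_{t,k} e^{−η ℓ_{t,k}}`, one has
`(1/2) w_{t−1,k} ≤ w_{t,k} ≤ 2 w_{t−1,k}` for all `t ≥ 2` and `k`. -/
theorem stmt19 (K : ℕ) (hK : 1 ≤ K) (G η : ℝ) (hG : 0 < G) (hη0 : 0 < η)
    (hη : η ≤ 1 / (8 * G))
    (what w ℓ m : ℕ → Fin K → ℝ)
    (hinitpos : ∀ k, 0 < what 1 k) (hinitsum : ∑ k, what 1 k = 1)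
    (hℓ : ∀ t k, 0 ≤ ℓ t k ∧ ℓ t k ≤ G) (hm : ∀ t k, 0 ≤ m t k ∧ m t k ≤ G)
    (hw : ∀ t, 1 ≤ t → ∀ k,
      w t k = what t k * Real.exp (-η * m t k) / ∑ j, what t j * Real.exp (-η * m t j))
    (hwhat : ∀ t, 1 ≤ t → ∀ k,
      what (t + 1) k = what t k * Real.exp (-η * ℓ t k) / ∑ j, what t j * Real.exp (-η * ℓ t j)) :
    ∀ t, 2 ≤ t → ∀ k, (1 / 2) * w (t - 1) k ≤ w t k ∧ w t k ≤ 2 * w (t - 1) k := by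
  have hηG : η * G ≤ 1 / 8 := by
    rw [le_div_iff₀ (by positivity)] at hη
    linarith
  have hpos : ∀ t, 1 ≤ t → ∀ k, 0 < what t k := by
    intro t ht
    induction t, ht using Nat.le_induction with
    | base => exact hinitpos
    | succ n hn ih =>
      intro k
      rw [hwhat n hn k]
      exact div_pos (mul_pos (ih k) (Real.exp_pos _))
        (Finset.sum_pos (fun j _ => mul_pos (ih j) (Real.exp_pos _)) ⟨k, Finset.mem_univ k⟩)
  intro t ht k
  obtain ⟨s, rfl⟩ : ∃ s, t = s + 1 := ⟨t - 1, by omega⟩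
  have hs : 1 ≤ s := by omega
  rw [Nat.add_sub_cancel]
  have hZ : 0 < ∑ j, what s j * Real.exp (-η * ℓ s j) :=
    Finset.sum_pos (fun j _ => mul_pos (hpos s hs j) (Real.exp_pos _)) ⟨k, Finset.mem_univ k⟩
  have key : w (s + 1) k =
      (what s k * Real.exp (-η * ℓ s k) * Real.exp (-η * m (s + 1) k)) /
        ∑ j, what s j * Real.exp (-η * ℓ s j) * Real.exp (-η * m (s + 1) j) := by
    rw [hw (s + 1) (by omega) k]
    simp only [hwhat s hs]
    generalize (∑ j, what s j * Real.exp (-η * ℓ s j)) = Z at *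
    simp only [div_mul_eq_mul_div]
    rw [← Finset.sum_div, div_div_div_cancel_right₀ hZ.ne']
  have hab : ∀ j, 3 / 4 * (what s j * Real.exp (-η * m s j)) ≤
        what s j * Real.exp (-η * ℓ s j) * Real.exp (-η * m (s + 1) j) ∧
      what s j * Real.exp (-η * ℓ s j) * Real.exp (-η * m (s + 1) j) ≤
        3 / 2 * (what s j * Real.exp (-η * m s j)) := by
    intro j
    have e : what s j * Real.exp (-η * ℓ s j) * Real.exp (-η * m (s + 1) j) =
        Real.exp (η * (m s j - ℓ s j - m (s + 1) j)) * (what s j * Real.exp (-η * m s j)) := by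
      have : Real.exp (-η * ℓ s j) * Real.exp (-η * m (s + 1) j) =
          Real.exp (η * (m s j - ℓ s j - m (s + 1) j)) * Real.exp (-η * m s j) := by
        rw [← Real.exp_add, ← Real.exp_add]; congr 1; ring
      rw [mul_assoc, this]; ring
    have hp := mul_pos (hpos s hs j) (Real.exp_pos (-η * m s j))
    obtain ⟨l1, l2⟩ := hℓ s j
    obtain ⟨m1, m2⟩ := hm s j
    obtain ⟨n1, n2⟩ := hm (s + 1) j
    obtain ⟨f1, f2⟩ := exp_factor_bounds (η * (m s j - ℓ s j - m (s + 1) j))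
      (by nlinarith [mul_le_mul_of_nonneg_left
            (show -(2 * G) ≤ m s j - ℓ s j - m (s + 1) j by linarith) hη0.le])
      (by nlinarith [mul_le_mul_of_nonneg_left
            (show m s j - ℓ s j - m (s + 1) j ≤ G by linarith) hη0.le])
    rw [e]
    exact ⟨mul_le_mul_of_nonneg_right f1 hp.le, mul_le_mul_of_nonneg_right f2 hp.le⟩
  rw [key, hw s hs k]
  exact normalize_stable
    (fun j => what s j * Real.exp (-η * ℓ s j) * Real.exp (-η * m (s + 1) j))
    (fun j => what s j * Real.exp (-η * m s j))
    (fun j => mul_pos (hpos s hs j) (Real.exp_pos _))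
    (fun j => (hab j).1) (fun j => (hab j).2) k
end
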